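/- arXiv:2504.08382 — 3 statements merged into one kernel-verified Lean document; each statement's English description precedes it below -/
import Mathlib

section
/- Let T > 0, let y : [0, T] → ℝ be continuous, nonnegative, and differentiable on (0, T), and let p, a, g : [0, T] → ℝ be continuous nonnegative functions such that y′(t) + p(t) ≤ g(t)·y(t) + a(t) for every t ∈ (0, T). Then for every t ∈ [0, T]: (sup over s ∈ [0, t] of y(s)) + ∫₀ᵗ p(s) ds ≤ 2·exp(∫₀ᵗ g(s) ds)·(y(0) + ∫₀ᵗ a(s) ds). -/
/-!
Integrating the differential inequality gives `y + ∫ p ≤ y 0 + ∫ (g y + a)`. Since `p` and `g` are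
nonnegative, `y` may be replaced by `u = y + ∫ p` on the right, so Grönwall's inequality in integral
form bounds `u t` by `exp (∫ g) (y 0 + ∫ a)`. Grönwall's inequality itself holds because the
absolutely continuous function `exp (-∫ g) v - ∫ a`, with `v = y 0 + ∫ (g u + a)`, has nonpositive
derivative almost everywhere. The majorant is monotone in time, so it controls `sup y` and, since
`y ≥ 0`, also `∫ p` separately; hence the factor `2`.
-/

open MeasureTheory Set

theorem absolutelyContinuousOnInterval_comp_of_lipschitzOnWith {X Y : Type*}
    [PseudoMetricSpace X] [PseudoMetricSpace Y] {φ : X → Y} {f : ℝ → X} {a b : ℝ} {K : NNReal}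
    (hφ : LipschitzOnWith K φ (f '' uIcc a b)) (hf : AbsolutelyContinuousOnInterval f a b) :
    AbsolutelyContinuousOnInterval (φ ∘ f) a b := by
  rw [AbsolutelyContinuousOnInterval] at hf ⊢
  have hKf := hf.const_mul (K : ℝ)
  rw [mul_zero] at hKf
  refine squeeze_zero' (.of_forall fun E ↦ Finset.sum_nonneg fun _ _ ↦ dist_nonneg) ?_ hKf
  filter_upwards [Filter.mem_inf_of_right (Filter.mem_principal_self _)] with E hE
  rw [Finset.mul_sum]
  exact Finset.sum_le_sum fun i hi ↦ hφ.dist_le_mul _ (mem_image_of_mem f (hE.1 i hi).1)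
    _ (mem_image_of_mem f (hE.1 i hi).2)

theorem absolutelyContinuousOnInterval_comp_of_locallyLipschitz {E Y : Type*}
    [SeminormedAddCommGroup E] [PseudoMetricSpace Y] {φ : E → Y} {f : ℝ → E} {a b : ℝ}
    (hφ : LocallyLipschitz φ) (hf : AbsolutelyContinuousOnInterval f a b) :
    AbsolutelyContinuousOnInterval (φ ∘ f) a b := by
  obtain ⟨K, hK⟩ : ∃ K, LipschitzOnWith K φ (f '' uIcc a b) :=
    hφ.locallyLipschitzOn.exists_lipschitzOnWith_of_compact
      (isCompact_uIcc.image_of_continuousOn hf.continuousOn)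
  exact absolutelyContinuousOnInterval_comp_of_lipschitzOnWith hK hf

theorem antitoneOn_of_ae_deriv_nonpos {f : ℝ → ℝ} {a b : ℝ}
    (hf : AbsolutelyContinuousOnInterval f a b)
    (hf' : ∀ᵐ x, x ∈ uIcc a b → deriv f x ≤ 0) : AntitoneOn f (uIcc a b) := by
  intro s hs t ht hst
  have hsub : uIcc s t ⊆ uIcc a b := uIcc_subset_uIcc hs ht
  have hint : ∫ x in s..t, deriv f x ≤ 0 := by
    rw [intervalIntegral.integral_of_le hst]
    refine integral_nonpos_of_ae ((ae_restrict_iff' measurableSet_Ioc).2 ?_)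
    filter_upwards [hf'] with x hx hxst
    exact hx (hsub (Icc_subset_uIcc (Ioc_subset_Icc_self hxst)))
  rw [(hf.mono hsub).integral_deriv_eq_sub] at hint
  exact sub_nonpos.1 hint

section Gronwall

variable {a b : ℝ}

theorem integral_nonneg_of_mem_Icc {f : ℝ → ℝ} (hf : ∀ x ∈ Icc a b, 0 ≤ f x) {t : ℝ}
    (ht : t ∈ Icc a b) : 0 ≤ ∫ x in a..t, f x :=
  intervalIntegral.integral_nonneg ht.1 fun x hx ↦ hf x (Icc_subset_Icc_right ht.2 hx)

theorem monotoneOn_integral_of_nonneg {f : ℝ → ℝ} (hf : IntervalIntegrable f volume a b)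
    (hf_nonneg : ∀ x ∈ Icc a b, 0 ≤ f x) :
    MonotoneOn (fun t ↦ ∫ x in a..t, f x) (Icc a b) := by
  intro s hs t ht hst
  have hft : IntervalIntegrable f volume a t :=
    hf.mono_set (uIcc_subset_uIcc_left (Icc_subset_uIcc ht))
  refine intervalIntegral.integral_mono_interval le_rfl hs.1 hst ?_ hft
  exact (ae_restrict_iff' measurableSet_Ioc).2
    (.of_forall fun x hx ↦ hf_nonneg x ⟨hx.1.le, hx.2.trans ht.2⟩)

theorem le_exp_integral_mul_of_ae_deriv_le {v f g : ℝ → ℝ}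
    (hv : AbsolutelyContinuousOnInterval v a b)
    (hf : IntervalIntegrable f volume a b) (hf_nonneg : ∀ x ∈ Icc a b, 0 ≤ f x)
    (hg : IntervalIntegrable g volume a b) (hg_nonneg : ∀ x ∈ Icc a b, 0 ≤ g x)
    (hv' : ∀ᵐ x, x ∈ Icc a b → deriv v x ≤ g x * v x + f x) {t : ℝ} (ht : t ∈ Icc a b) :
    v t ≤ Real.exp (∫ x in a..t, g x) * (v a + ∫ x in a..t, f x) := by
  have hab : uIcc a b = Icc a b := uIcc_of_le (ht.1.trans ht.2)
  set G : ℝ → ℝ := fun t ↦ ∫ x in a..t, g x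
  set F : ℝ → ℝ := fun t ↦ ∫ x in a..t, f x
  set w : ℝ → ℝ := fun t ↦ Real.exp (-G t) * v t - F t
  have hw : AbsolutelyContinuousOnInterval w a b := by
    have hG := hg.absolutelyContinuousOnInterval_intervalIntegral left_mem_uIcc
    have hF := hf.absolutelyContinuousOnInterval_intervalIntegral left_mem_uIcc
    exact ((absolutelyContinuousOnInterval_comp_of_locallyLipschitz
      (Real.contDiff_exp (n := 1)).locallyLipschitz hG.neg).mul hv).sub hF
  have hw' : ∀ᵐ x, x ∈ uIcc a b → deriv w x ≤ 0 := by
    filter_upwards [hg.ae_hasDerivAt_integral, hf.ae_hasDerivAt_integral, hv.ae_differentiableAt,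
      hv'] with x hGx hFx hvx hle hx
    have hderiv : HasDerivAt w
        (Real.exp (-G x) * -g x * v x + Real.exp (-G x) * deriv v x - f x) x :=
      ((hGx hx a left_mem_uIcc).neg.exp.mul (hvx hx).hasDerivAt).sub (hFx hx a left_mem_uIcc)
    rw [hab] at hx
    have hexp_f : Real.exp (-G x) * f x ≤ f x :=
      mul_le_of_le_one_left (hf_nonneg x hx)
        (Real.exp_le_one_iff.2 (neg_nonpos.2 (integral_nonneg_of_mem_Icc hg_nonneg hx)))
    have hexp_v : Real.exp (-G x) * deriv v x ≤ Real.exp (-G x) * (g x * v x + f x) := by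
      gcongr
      exact hle hx
    rw [hderiv.deriv]
    linarith
  have hwt : w t ≤ w a := antitoneOn_of_ae_deriv_nonpos hw hw' left_mem_uIcc (hab ▸ ht) ht.1
  have hwa : w a = v a := by simp [w, G, F]
  calc v t = Real.exp (G t) * (w t + F t) := by simp [w, ← mul_assoc, ← Real.exp_add]
    _ ≤ Real.exp (G t) * (v a + F t) := by rw [hwa] at hwt; gcongr

theorem le_exp_integral_mul_of_le_add_integral {u f g : ℝ → ℝ} {c : ℝ}
    (hf : IntervalIntegrable f volume a b) (hf_nonneg : ∀ x ∈ Icc a b, 0 ≤ f x)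
    (hg : IntervalIntegrable g volume a b) (hg_nonneg : ∀ x ∈ Icc a b, 0 ≤ g x)
    (hgu : IntervalIntegrable (fun x ↦ g x * u x) volume a b)
    (hu : ∀ t ∈ Icc a b, u t ≤ c + ∫ x in a..t, (g x * u x + f x)) {t : ℝ} (ht : t ∈ Icc a b) :
    u t ≤ Real.exp (∫ x in a..t, g x) * (c + ∫ x in a..t, f x) := by
  set v : ℝ → ℝ := fun t ↦ c + ∫ x in a..t, (g x * u x + f x)
  have hv : AbsolutelyContinuousOnInterval v a b :=
    (contDiffOn_const.absolutelyContinuousOnInterval (f := fun _ ↦ c)).add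
      ((hgu.add hf).absolutelyContinuousOnInterval_intervalIntegral left_mem_uIcc)
  have hv' : ∀ᵐ x, x ∈ Icc a b → deriv v x ≤ g x * v x + f x := by
    filter_upwards [(hgu.add hf).ae_hasDerivAt_integral] with x hvx hx
    rw [((hvx (Icc_subset_uIcc hx) a left_mem_uIcc).const_add c).deriv]
    gcongr
    exacts [hg_nonneg x hx, hu x hx]
  have hva : v a = c := by simp [v]
  calc u t ≤ v t := hu t ht
    _ ≤ Real.exp (∫ x in a..t, g x) * (v a + ∫ x in a..t, f x) :=
        le_exp_integral_mul_of_ae_deriv_le hv hf hf_nonneg hg hg_nonneg hv' ht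
    _ = Real.exp (∫ x in a..t, g x) * (c + ∫ x in a..t, f x) := by rw [hva]

theorem add_integral_le_add_integral_of_hasDerivWithinAt {y y' p h : ℝ → ℝ} (hab : a ≤ b)
    (hy : ContinuousOn y (Icc a b)) (hy' : ∀ t ∈ Ioo a b, HasDerivWithinAt y (y' t) (Ioi t) t)
    (hp : IntervalIntegrable p volume a b) (hh : IntervalIntegrable h volume a b)
    (hle : ∀ t ∈ Ioo a b, y' t + p t ≤ h t) :
    y b + ∫ t in a..b, p t ≤ y a + ∫ t in a..b, h t := by
  have hsub : y b - y a ≤ ∫ t in a..b, (h t - p t) :=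
    intervalIntegral.sub_le_integral_of_hasDeriv_right_of_le hab hy hy'
      ((intervalIntegrable_iff_integrableOn_Icc_of_le hab).1 (hh.sub hp))
      fun t ht ↦ le_sub_iff_add_le.2 (hle t ht)
  rw [intervalIntegral.integral_sub hh hp] at hsub
  linarith

theorem add_integral_le_exp_integral_mul_of_hasDerivWithinAt {y y' p f g : ℝ → ℝ}
    (hy : ContinuousOn y (Icc a b)) (hy' : ∀ t ∈ Ioo a b, HasDerivWithinAt y (y' t) (Ioi t) t)
    (hp : IntervalIntegrable p volume a b) (hp_nonneg : ∀ t ∈ Icc a b, 0 ≤ p t)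
    (hf : IntervalIntegrable f volume a b) (hf_nonneg : ∀ t ∈ Icc a b, 0 ≤ f t)
    (hg : IntervalIntegrable g volume a b) (hg_nonneg : ∀ t ∈ Icc a b, 0 ≤ g t)
    (hle : ∀ t ∈ Ioo a b, y' t + p t ≤ g t * y t + f t) {t : ℝ} (ht : t ∈ Icc a b) :
    y t + ∫ x in a..t, p x ≤ Real.exp (∫ x in a..t, g x) * (y a + ∫ x in a..t, f x) := by
  have hab : uIcc a b = Icc a b := uIcc_of_le (ht.1.trans ht.2)
  set u : ℝ → ℝ := fun t ↦ y t + ∫ x in a..t, p x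
  have hgy : IntervalIntegrable (fun x ↦ g x * y x) volume a b :=
    hg.mul_continuousOn (hab ▸ hy)
  have hP : ContinuousOn (fun t ↦ ∫ x in a..t, p x) (Icc a b) :=
    hab ▸ (hp.absolutelyContinuousOnInterval_intervalIntegral left_mem_uIcc).continuousOn
  have hgu : IntervalIntegrable (fun x ↦ g x * u x) volume a b :=
    hg.mul_continuousOn (hab ▸ hy.add hP)
  refine le_exp_integral_mul_of_le_add_integral hf hf_nonneg hg hg_nonneg hgu (fun s hs ↦ ?_) ht
  have hsub : uIcc a s ⊆ uIcc a b := uIcc_subset_uIcc_left (hab ▸ hs)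
  calc u s ≤ y a + ∫ x in a..s, (g x * y x + f x) :=
        add_integral_le_add_integral_of_hasDerivWithinAt hs.1
          (hy.mono (Icc_subset_Icc_right hs.2))
          (fun x hx ↦ hy' x (Ioo_subset_Ioo_right hs.2 hx)) (hp.mono_set hsub)
          ((hgy.add hf).mono_set hsub) fun x hx ↦ hle x (Ioo_subset_Ioo_right hs.2 hx)
    _ ≤ y a + ∫ x in a..s, (g x * u x + f x) := by
        gcongr y a + ?_
        refine intervalIntegral.integral_mono_on hs.1 ((hgy.add hf).mono_set hsub)
          ((hgu.add hf).mono_set hsub) fun x hx ↦ ?_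
        have hxb : x ∈ Icc a b := Icc_subset_Icc_right hs.2 hx
        gcongr
        exacts [hg_nonneg x hxb, le_add_of_nonneg_right (integral_nonneg_of_mem_Icc hp_nonneg hxb)]

theorem monotoneOn_exp_integral_mul_add_integral {f g : ℝ → ℝ} {c : ℝ} (hc : 0 ≤ c)
    (hf : IntervalIntegrable f volume a b) (hf_nonneg : ∀ x ∈ Icc a b, 0 ≤ f x)
    (hg : IntervalIntegrable g volume a b) (hg_nonneg : ∀ x ∈ Icc a b, 0 ≤ g x) :
    MonotoneOn (fun t ↦ Real.exp (∫ x in a..t, g x) * (c + ∫ x in a..t, f x)) (Icc a b) :=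
  (Real.exp_monotone.comp_monotoneOn (monotoneOn_integral_of_nonneg hg hg_nonneg)).mul
    ((monotoneOn_integral_of_nonneg hf hf_nonneg).const_add c)
    (fun _ _ ↦ (Real.exp_pos _).le)
    (fun _ ht ↦ add_nonneg hc (integral_nonneg_of_mem_Icc hf_nonneg ht))

end Gronwall

theorem sSup_image_Icc_add_le_two_mul {α : Type*} [Preorder α] {a b : α} {y P M : α → ℝ}
    (hab : a ≤ b) (hy : 0 ≤ y b) (hP : ∀ t ∈ Icc a b, 0 ≤ P t) (hM : MonotoneOn M (Icc a b))
    (hyPM : ∀ t ∈ Icc a b, y t + P t ≤ M t) : sSup (y '' Icc a b) + P b ≤ 2 * M b := by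
  have hb : b ∈ Icc a b := right_mem_Icc.2 hab
  have hsup : sSup (y '' Icc a b) ≤ M b := by
    refine csSup_le ((nonempty_Icc.2 hab).image y) (forall_mem_image.2 fun s hs ↦ ?_)
    exact (le_add_of_nonneg_right (hP s hs)).trans ((hyPM s hs).trans (hM hs hb hs.2))
  linarith [hyPM b hb]

theorem stmt1_general (T : ℝ) (y y' p a g : ℝ → ℝ)
    (hy_cont : ContinuousOn y (Icc 0 T))
    (hy_nonneg : ∀ t ∈ Icc 0 T, 0 ≤ y t)
    (hy_deriv : ∀ t ∈ Ioo 0 T, HasDerivWithinAt y (y' t) (Ioi t) t)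
    (hp_int : IntervalIntegrable p volume 0 T)
    (hp_nonneg : ∀ t ∈ Icc 0 T, 0 ≤ p t)
    (ha_int : IntervalIntegrable a volume 0 T)
    (ha_nonneg : ∀ t ∈ Icc 0 T, 0 ≤ a t)
    (hg_int : IntervalIntegrable g volume 0 T)
    (hg_nonneg : ∀ t ∈ Icc 0 T, 0 ≤ g t)
    (hineq : ∀ t ∈ Ioo 0 T, y' t + p t ≤ g t * y t + a t) :
    ∀ t ∈ Icc 0 T,
      sSup (y '' Icc 0 t) + (∫ s in (0 : ℝ)..t, p s) ≤
        2 * Real.exp (∫ s in (0 : ℝ)..t, g s) * (y 0 + ∫ s in (0 : ℝ)..t, a s) := by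
  intro t ht
  have hsub : Icc 0 t ⊆ Icc 0 T := Icc_subset_Icc_right ht.2
  have hy0 : 0 ≤ y 0 := hy_nonneg 0 (left_mem_Icc.2 (ht.1.trans ht.2))
  rw [mul_assoc]
  exact sSup_image_Icc_add_le_two_mul ht.1 (hy_nonneg t ht)
    (fun _ hs ↦ integral_nonneg_of_mem_Icc hp_nonneg (hsub hs))
    ((monotoneOn_exp_integral_mul_add_integral hy0 ha_int ha_nonneg hg_int hg_nonneg).mono hsub)
    (fun _ hs ↦ add_integral_le_exp_integral_mul_of_hasDerivWithinAt hy_cont hy_deriv hp_int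
      hp_nonneg ha_int ha_nonneg hg_int hg_nonneg hineq (hsub hs))

/-- Grönwall-type inequality with a dissipation term (used in Theorems 4.1 and 5.1):
if `y' + p ≤ g·y + a` on `(0,T)` with `y, p, a, g` continuous and nonnegative, then
`sup_{[0,t]} y + ∫₀ᵗ p ≤ 2 exp(∫₀ᵗ g) (y(0) + ∫₀ᵗ a)` for all `t ∈ [0,T]`. -/
theorem stmt1 (T : ℝ) (hT : 0 < T) (y y' p a g : ℝ → ℝ)
    (hy_cont : ContinuousOn y (Set.Icc 0 T))
    (hy_nonneg : ∀ t ∈ Set.Icc (0 : ℝ) T, 0 ≤ y t)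
    (hy_deriv : ∀ t ∈ Set.Ioo (0 : ℝ) T, HasDerivAt y (y' t) t)
    (hp_cont : ContinuousOn p (Set.Icc 0 T))
    (hp_nonneg : ∀ t ∈ Set.Icc (0 : ℝ) T, 0 ≤ p t)
    (ha_cont : ContinuousOn a (Set.Icc 0 T))
    (ha_nonneg : ∀ t ∈ Set.Icc (0 : ℝ) T, 0 ≤ a t)
    (hg_cont : ContinuousOn g (Set.Icc 0 T))
    (hg_nonneg : ∀ t ∈ Set.Icc (0 : ℝ) T, 0 ≤ g t)
    (hineq : ∀ t ∈ Set.Ioo (0 : ℝ) T, y' t + p t ≤ g t * y t + a t) :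
    ∀ t ∈ Set.Icc (0 : ℝ) T,
      sSup (y '' Set.Icc 0 t) + (∫ s in (0 : ℝ)..t, p s) ≤
        2 * Real.exp (∫ s in (0 : ℝ)..t, g s) * (y 0 + ∫ s in (0 : ℝ)..t, a s) := by
  exact stmt1_general T y y' p a g hy_cont hy_nonneg
    (fun t ht ↦ (hy_deriv t ht).hasDerivWithinAt) (hp_cont.intervalIntegrable_of_Icc hT.le)
    hp_nonneg (ha_cont.intervalIntegrable_of_Icc hT.le) ha_nonneg
    (hg_cont.intervalIntegrable_of_Icc hT.le) hg_nonneg hineq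
end

section
/- Fix a dimension d ≥ 1 and real numbers α and κ. Let η : ℝ^d → ℝ be twice continuously differentiable, let c : ℝ^d → ℝ^d be a continuously differentiable vector field, let δ : ℝ^d → ℝ be continuous, and let w : ℝ^d → ℝ be continuously differentiable with compact support. Set ω := exp(−α·η), b := c − α·κ·∇η, and E := α·(∇η)·b − div b. Then ∫_{ℝ^d} [ κ·∇w·∇(ω·w) + (c·∇w)·ω·w + δ·ω·w² ] dx = ∫_{ℝ^d} [ κ·ω·|∇w|² + (δ + E/2)·ω·w² ] dx. -/
open scoped RealInnerProductSpace
open MeasureTheory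

/-- Divergence of a vector field on `ℝ^d`. -/
noncomputable def vdiv {d : ℕ} (F : EuclideanSpace ℝ (Fin d) → EuclideanSpace ℝ (Fin d))
    (x : EuclideanSpace ℝ (Fin d)) : ℝ :=
  ∑ i, fderiv ℝ F x (EuclideanSpace.single i 1) i

/-!
Since `∇(ω w) = ω ∇w + w ∇ω`, the integrand of the bilinear form is `κ ω |∇w|² + δ ω w²` plus the
pairing of the vector field `κ ∇ω + ω c` with `w ∇w = ∇(w²) / 2`, and integration by parts turns
the latter into `-(1/2) ∫ div (κ ∇ω + ω c) w²`. For `ω = exp (-α η)` we have `∇ω = -α ω ∇η`, so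
this field is `ω b` and its divergence is `-ω E`.
-/

theorem hasCompactSupport_fun_pow {X R : Type*} [TopologicalSpace X] [MonoidWithZero R]
    {f : X → R} (hf : HasCompactSupport f) {n : ℕ} (hn : n ≠ 0) :
    HasCompactSupport fun x => f x ^ n :=
  hf.comp_left (g := fun t => t ^ n) (zero_pow hn)

section Divergence

variable {V : Type*} [NormedAddCommGroup V] [NormedSpace ℝ V]

/-- The divergence of a vector field on a real normed space, as the trace of its derivative.
This coordinate-free form of `vdiv` is meant for finite-dimensional spaces; elsewhere
`LinearMap.trace` takes the junk value `0`. -/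
noncomputable def divergence (F : V → V) (x : V) : ℝ :=
  LinearMap.trace ℝ V (fderiv ℝ F x)

theorem vdiv_eq_divergence {d : ℕ} (F : EuclideanSpace ℝ (Fin d) → EuclideanSpace ℝ (Fin d)) :
    vdiv F = divergence F := by
  ext x
  simp [vdiv, divergence, EuclideanSpace.inner_single_left,
    LinearMap.trace_eq_sum_inner _ (EuclideanSpace.basisFun (Fin d) ℝ)]

variable [FiniteDimensional ℝ V]

theorem divergence_fun_smul {f : V → ℝ} {F : V → V} {x : V}
    (hf : DifferentiableAt ℝ f x) (hF : DifferentiableAt ℝ F x) :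
    divergence (fun y => f y • F y) x = f x * divergence F x + fderiv ℝ f x (F x) := by
  have htrace : LinearMap.trace ℝ V ((fderiv ℝ f x).smulRight (F x) : V →L[ℝ] V) =
      fderiv ℝ f x (F x) :=
    LinearMap.trace_smulRight (fderiv ℝ f x : V →ₗ[ℝ] ℝ) (F x)
  rw [divergence, divergence, fderiv_fun_smul hf hF, ContinuousLinearMap.toLinearMap_add,
    ContinuousLinearMap.toLinearMap_smul, map_add, map_smul, htrace, smul_eq_mul]

/-- The trace as a continuous linear functional on the operators of a finite-dimensional space,
which lets it commute with limits and integrals. -/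
noncomputable def traceCLM (V : Type*) [NormedAddCommGroup V] [NormedSpace ℝ V]
    [FiniteDimensional ℝ V] : (V →L[ℝ] V) →L[ℝ] ℝ :=
  LinearMap.toContinuousLinearMap (LinearMap.trace ℝ V ∘ₗ ContinuousLinearMap.coeLM ℝ)

theorem traceCLM_fderiv (F : V → V) (x : V) : traceCLM V (fderiv ℝ F x) = divergence F x :=
  rfl

theorem continuous_divergence {F : V → V} (hF : ContDiff ℝ 1 F) : Continuous (divergence F) :=
  (traceCLM V).continuous.comp (hF.continuous_fderiv one_ne_zero)

variable [MeasurableSpace V] [BorelSpace V] (μ : Measure V) [μ.IsAddHaarMeasure]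

theorem integral_fderiv_eq_zero {W : Type*} [NormedAddCommGroup W] [NormedSpace ℝ W]
    {g : V → W} (hg : ContDiff ℝ 1 g) (hgs : HasCompactSupport g) :
    ∫ x, fderiv ℝ g x ∂μ = 0 := by
  have hg' : Integrable (fderiv ℝ g) μ :=
    (hg.continuous_fderiv one_ne_zero).integrable_of_hasCompactSupport (hgs.fderiv ℝ)
  ext v
  rw [ContinuousLinearMap.integral_apply hg' v]
  simpa using integral_smul_fderiv_eq_neg_fderiv_smul_of_integrable (μ := μ) (𝕜 := ℝ)
    (f := fun _ => (1 : ℝ)) (g := g) (v := v) (by simp)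
    (by simpa using hg'.apply_continuousLinearMap v)
    (by simpa using hg.continuous.integrable_of_hasCompactSupport hgs)
    (fun _ _ => differentiableAt_const _) (fun x _ => hg.differentiable one_ne_zero x)

theorem integral_divergence_eq_zero {F : V → V} (hF : ContDiff ℝ 1 F)
    (hFs : HasCompactSupport F) : ∫ x, divergence F x ∂μ = 0 := by
  have hF' : Integrable (fderiv ℝ F) μ :=
    (hF.continuous_fderiv one_ne_zero).integrable_of_hasCompactSupport (hFs.fderiv ℝ)
  simp only [← traceCLM_fderiv]
  rw [ContinuousLinearMap.integral_comp_comm _ hF', integral_fderiv_eq_zero μ hF hFs, map_zero]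

theorem integral_fderiv_apply_eq_neg_integral_mul_divergence {f : V → ℝ} {F : V → V}
    (hf : ContDiff ℝ 1 f) (hfs : HasCompactSupport f) (hF : ContDiff ℝ 1 F) :
    ∫ x, fderiv ℝ f x (F x) ∂μ = -∫ x, f x * divergence F x ∂μ := by
  have hdiv : Integrable (fun x => f x * divergence F x) μ :=
    (hf.continuous.mul (continuous_divergence hF)).integrable_of_hasCompactSupport hfs.mul_right
  have hderiv : Integrable (fun x => fderiv ℝ f x (F x)) μ :=
    ((hf.continuous_fderiv one_ne_zero).clm_apply hF.continuous).integrable_of_hasCompactSupport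
      ((hfs.fderiv ℝ).mono' fun x hx => subset_tsupport _ fun h => hx (by simp [h]))
  have hzero := integral_divergence_eq_zero μ (hf.smul hF) hfs.smul_right
  simp only [Pi.smul_def', divergence_fun_smul (hf.differentiable one_ne_zero _)
    (hF.differentiable one_ne_zero _)] at hzero
  rw [integral_add hdiv hderiv] at hzero
  exact eq_neg_of_add_eq_zero_right hzero

theorem integral_mul_fderiv_self_apply {w : V → ℝ} {F : V → V}
    (hw : ContDiff ℝ 1 w) (hws : HasCompactSupport w) (hF : ContDiff ℝ 1 F) :
    ∫ x, w x * fderiv ℝ w x (F x) ∂μ = ∫ x, -(divergence F x / 2) * w x ^ 2 ∂μ := by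
  have hsq : ∀ x, w x * fderiv ℝ w x (F x) = 1 / 2 * fderiv ℝ (fun y => w y ^ 2) x (F x) := by
    intro x
    rw [fderiv_fun_pow 2 (hw.differentiable one_ne_zero x)]
    simp only [smul_apply, smul_eq_mul, nsmul_eq_mul, Nat.cast_ofNat,
      Nat.add_one_sub_one, pow_one]
    ring
  simp only [hsq]
  rw [integral_const_mul, integral_fderiv_apply_eq_neg_integral_mul_divergence μ (hw.pow 2)
      (hasCompactSupport_fun_pow hws two_ne_zero) hF, ← integral_neg, ← integral_const_mul]
  exact integral_congr_ae (.of_forall fun x => by ring)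

end Divergence

section Gradient

variable {V : Type*} [NormedAddCommGroup V] [InnerProductSpace ℝ V] [CompleteSpace V]

theorem contDiff_gradient {f : V → ℝ} {m n : WithTop ℕ∞} (hf : ContDiff ℝ n f)
    (hmn : m + 1 ≤ n) : ContDiff ℝ m (gradient f) :=
  (InnerProductSpace.toDual ℝ V).symm.contDiff.comp (hf.fderiv_right hmn)

theorem hasCompactSupport_gradient {f : V → ℝ} (hf : HasCompactSupport f) :
    HasCompactSupport (gradient f) :=
  (hf.fderiv ℝ).comp_left (map_zero (InnerProductSpace.toDual ℝ V).symm)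

theorem gradient_fun_mul {f g : V → ℝ} {x : V}
    (hf : DifferentiableAt ℝ f x) (hg : DifferentiableAt ℝ g x) :
    gradient (fun y => f y * g y) x = f x • gradient g x + g x • gradient f x := by
  simp only [gradient, fderiv_fun_mul hf hg, map_add, map_smul]

theorem gradient_fun_comp {h : ℝ → ℝ} {f : V → ℝ} {x : V}
    (hh : DifferentiableAt ℝ h (f x)) (hf : DifferentiableAt ℝ f x) :
    gradient (fun y => h (f y)) x = deriv h (f x) • gradient f x := by
  have hfderiv : fderiv ℝ (fun y => h (f y)) x = deriv h (f x) • fderiv ℝ f x :=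
    (hh.hasDerivAt.comp_hasFDerivAt x hf.hasFDerivAt).fderiv
  rw [gradient, hfderiv, map_smul, gradient]

end Gradient

section WeightedForm

variable {V : Type*} [NormedAddCommGroup V] [InnerProductSpace ℝ V] [CompleteSpace V]

theorem weighted_form_eq_energy_add_flux {ω w : V → ℝ} {x : V} (κ δ : ℝ) (c : V)
    (hω : DifferentiableAt ℝ ω x) (hw : DifferentiableAt ℝ w x) :
    κ * ⟪gradient w x, gradient (fun y => ω y * w y) x⟫ + ⟪c, gradient w x⟫ * (ω x * w x) +
        δ * ω x * w x ^ 2 =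
      κ * ω x * ‖gradient w x‖ ^ 2 + δ * ω x * w x ^ 2 +
        w x * fderiv ℝ w x (κ • gradient ω x + ω x • c) := by
  rw [gradient_fun_mul hω hw, ← inner_gradient_left, real_inner_comm (gradient w x) c,
    ← real_inner_self_eq_norm_sq]
  simp only [inner_add_right, real_inner_smul_right]
  ring

theorem integrable_weighted_energy [MeasurableSpace V] [OpensMeasurableSpace V]
    {μ : Measure V} {κ ω ρ w : V → ℝ} (hκ : LocallyIntegrable κ μ)
    (hω : Continuous ω) (hρ : LocallyIntegrable ρ μ) (hw : ContDiff ℝ 1 w)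
    (hws : HasCompactSupport w) :
    Integrable (fun x => κ x * ω x * ‖gradient w x‖ ^ 2 + ρ x * ω x * w x ^ 2) μ := by
  have hgrad : Continuous (gradient w) := (contDiff_gradient hw (zero_add 1).le).continuous
  have hdiffusion : Integrable (fun x => (ω x * ‖gradient w x‖ ^ 2) • κ x) μ :=
    hκ.integrable_smul_left_of_hasCompactSupport (hω.mul (hgrad.norm.pow 2))
      (hasCompactSupport_fun_pow (hasCompactSupport_gradient hws).norm two_ne_zero).mul_left
  have hreaction : Integrable (fun x => (ω x * w x ^ 2) • ρ x) μ :=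
    hρ.integrable_smul_left_of_hasCompactSupport (hω.mul (hw.continuous.pow 2))
      (hasCompactSupport_fun_pow hws two_ne_zero).mul_left
  refine (hdiffusion.add hreaction).congr (.of_forall fun x => ?_)
  simp only [Pi.add_apply, smul_eq_mul]
  ring

end WeightedForm

section Coercivity

variable {V : Type*} [NormedAddCommGroup V] [InnerProductSpace ℝ V] [FiniteDimensional ℝ V]
  [MeasurableSpace V] [BorelSpace V] (μ : Measure V) [μ.IsAddHaarMeasure]

theorem integral_weighted_form_eq {κ δ ω w : V → ℝ} {c F : V → V}
    (hκ : LocallyIntegrable κ μ) (hδ : LocallyIntegrable δ μ) (hω : Differentiable ℝ ω)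
    (hw : ContDiff ℝ 1 w) (hws : HasCompactSupport w) (hF : ContDiff ℝ 1 F)
    (hFc : ∀ x, F x = κ x • gradient ω x + ω x • c x) :
    ∫ x, (κ x * ⟪gradient w x, gradient (fun y => ω y * w y) x⟫ +
        ⟪c x, gradient w x⟫ * (ω x * w x) + δ x * ω x * w x ^ 2) ∂μ =
      ∫ x, (κ x * ω x * ‖gradient w x‖ ^ 2 +
        (δ x * ω x - divergence F x / 2) * w x ^ 2) ∂μ := by
  have henergy := integrable_weighted_energy hκ hω.continuous hδ hw hws
  have hflux : Integrable (fun x => w x * fderiv ℝ w x (F x)) μ :=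
    (hw.continuous.mul ((hw.continuous_fderiv one_ne_zero).clm_apply
      hF.continuous)).integrable_of_hasCompactSupport hws.mul_right
  have hdiv : Integrable (fun x => -(divergence F x / 2) * w x ^ 2) μ :=
    (((continuous_divergence hF).div_const 2).neg.mul
      (hw.continuous.pow 2)).integrable_of_hasCompactSupport
      (hasCompactSupport_fun_pow hws two_ne_zero).mul_left
  have hform : ∀ x, κ x * ⟪gradient w x, gradient (fun y => ω y * w y) x⟫ +
      ⟪c x, gradient w x⟫ * (ω x * w x) + δ x * ω x * w x ^ 2 =
      κ x * ω x * ‖gradient w x‖ ^ 2 + δ x * ω x * w x ^ 2 + w x * fderiv ℝ w x (F x) := fun x => by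
    rw [weighted_form_eq_energy_add_flux _ _ _ (hω x) (hw.differentiable one_ne_zero x), hFc]
  simp only [hform]
  rw [integral_add henergy hflux, integral_mul_fderiv_self_apply μ hw hws hF,
    ← integral_add henergy hdiv]
  exact integral_congr_ae (.of_forall fun x => by ring)

theorem stmt3_general {α : ℝ} {κ δ η w ω E : V → ℝ} {b c : V → V}
    (hκ : LocallyIntegrable κ μ) (hδ : LocallyIntegrable δ μ) (hη : ContDiff ℝ 1 η)
    (hbdiff : ContDiff ℝ 1 b) (hw : ContDiff ℝ 1 w) (hws : HasCompactSupport w)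
    (hω : ω = fun x => Real.exp (-(α * η x)))
    (hb : b = fun x => c x - (α * κ x) • gradient η x)
    (hE : E = fun x => α * ⟪gradient η x, b x⟫ - divergence b x) :
    ∫ x, (κ x * ⟪gradient w x, gradient (fun y => ω y * w y) x⟫ +
        ⟪c x, gradient w x⟫ * (ω x * w x) + δ x * ω x * w x ^ 2) ∂μ =
      ∫ x, (κ x * ω x * ‖gradient w x‖ ^ 2 + (δ x + E x / 2) * ω x * w x ^ 2) ∂μ := by
  have hωdiff : ContDiff ℝ 1 ω := hω ▸ (contDiff_const.mul hη).neg.exp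
  have hgrad : ∀ x, gradient ω x = -(α * ω x) • gradient η x := fun x => by
    have hderiv : HasDerivAt (fun t => Real.exp (-(α * t))) (-(α * ω x)) (η x) := by
      simpa [hω, mul_comm] using ((hasDerivAt_id (η x)).const_mul α).fun_neg.exp
    rw [← hderiv.deriv, ← gradient_fun_comp hderiv.differentiableAt
      (hη.differentiable one_ne_zero x), hω]
  have hflux : ∀ x, ω x • b x = κ x • gradient ω x + ω x • c x := fun x => by
    rw [hgrad, hb]
    module
  have hdiv : ∀ x, divergence (fun y => ω y • b y) x = -(E x * ω x) := fun x => by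
    rw [divergence_fun_smul (hωdiff.differentiable one_ne_zero x)
      (hbdiff.differentiable one_ne_zero x), ← inner_gradient_left, hgrad, real_inner_smul_left, hE]
    ring
  rw [integral_weighted_form_eq μ hκ hδ (hωdiff.differentiable one_ne_zero) hw hws
    (hωdiff.smul hbdiff) hflux]
  refine integral_congr_ae (.of_forall fun x => ?_)
  simp only [Pi.smul_def', hdiv]
  ring

end Coercivity

/-- Coercivity identity of Lemma 3.1 in its interior (compactly supported) form:
`∫ κ ∇w·∇(ωw) + (c·∇w) ω w + δ ω w² = ∫ κ ω |∇w|² + (δ + E/2) ω w²`. -/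
theorem stmt3 {d : ℕ} (hd : 1 ≤ d) (α κ : ℝ)
    (η : EuclideanSpace ℝ (Fin d) → ℝ) (hη : ContDiff ℝ 2 η)
    (c : EuclideanSpace ℝ (Fin d) → EuclideanSpace ℝ (Fin d)) (hc : ContDiff ℝ 1 c)
    (δ : EuclideanSpace ℝ (Fin d) → ℝ) (hδ : Continuous δ)
    (w : EuclideanSpace ℝ (Fin d) → ℝ) (hw : ContDiff ℝ 1 w)
    (hwsupp : HasCompactSupport w)
    (ω : EuclideanSpace ℝ (Fin d) → ℝ) (hω : ω = fun x => Real.exp (-(α * η x)))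
    (b : EuclideanSpace ℝ (Fin d) → EuclideanSpace ℝ (Fin d))
    (hb : b = fun x => c x - (α * κ) • gradient η x)
    (E : EuclideanSpace ℝ (Fin d) → ℝ)
    (hE : E = fun x => α * ⟪gradient η x, b x⟫ - vdiv b x) :
    (∫ x : EuclideanSpace ℝ (Fin d),
        (κ * ⟪gradient w x, gradient (fun y => ω y * w y) x⟫ +
          ⟪c x, gradient w x⟫ * (ω x * w x) + δ x * ω x * w x ^ 2)) =
      ∫ x : EuclideanSpace ℝ (Fin d),
        (κ * ω x * ‖gradient w x‖ ^ 2 + (δ x + E x / 2) * ω x * w x ^ 2) :=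
  stmt3_general volume (locallyIntegrable_const κ) hδ.locallyIntegrable (hη.of_le one_le_two)
    (hb ▸ hc.sub ((contDiff_gradient hη one_add_one_eq_two.le).const_smul _)) hw hwsupp hω hb
    (vdiv_eq_divergence b ▸ hE)
end

section
/- Fix real numbers α, κ with 0 ≤ α·κ ≤ 1/2 and α > 0. Let η(x, y) := eˣ·sin y, c(x, y) := (eˣ·sin y + y, eˣ·cos y − x), and E := α·(∇η)·(c − α·κ·∇η) − div(c − α·κ·∇η) on ℝ². Then: (i) c = ∇η + curl ψ with ψ(x, y) := (x² + y²)/2; (ii) div c = 0 and Δη = 0 everywhere; (iii) E(x, y) = α·eˣ·((1 − α·κ)·eˣ + y·sin y − x·cos y) for all (x, y); and (iv) E(x, y)/2 > 0 for every (x, y) ∈ [0, 1]², so that the admissibility condition δ ≥ max{0, −2E} holds with artificial reaction δ ≡ 0 and the resulting reaction weight L = E/2 is strictly positive on the domain [0, 1]². -/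
/-- Partial derivative in the first variable. -/
noncomputable def pdx (f : ℝ × ℝ → ℝ) (p : ℝ × ℝ) : ℝ := deriv (fun t => f (t, p.2)) p.1
/-- Partial derivative in the second variable. -/
noncomputable def pdy (f : ℝ × ℝ → ℝ) (p : ℝ × ℝ) : ℝ := deriv (fun t => f (p.1, t)) p.2
/-- Gradient on `ℝ²`. -/
noncomputable def grad2 (f : ℝ × ℝ → ℝ) (p : ℝ × ℝ) : ℝ × ℝ := (pdx f p, pdy f p)
/-- Divergence on `ℝ²`. -/
noncomputable def div2 (c : ℝ × ℝ → ℝ × ℝ) (p : ℝ × ℝ) : ℝ :=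
  pdx (fun q => (c q).1) p + pdy (fun q => (c q).2) p
/-- `curl ψ := (∂ψ/∂y, −∂ψ/∂x)`, the rotated gradient of a scalar function. -/
noncomputable def curl2 (ψ : ℝ × ℝ → ℝ) (p : ℝ × ℝ) : ℝ × ℝ := (pdy ψ p, -pdx ψ p)
/-- Euclidean inner product on `ℝ²`. -/
def dot2 (u v : ℝ × ℝ) : ℝ := u.1 * v.1 + u.2 * v.2
/-- Laplacian on `ℝ²`. -/
noncomputable def lap2 (f : ℝ × ℝ → ℝ) (p : ℝ × ℝ) : ℝ :=
  pdx (fun q => pdx f q) p + pdy (fun q => pdy f q) p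

/-
For `c = ∇η + curl ψ` the fitted field `b = c - ακ∇η` is `(1 - ακ)∇η + curl ψ`. Since `curl ψ` is
divergence free, `div b = (1 - ακ)Δη`, which vanishes for harmonic `η`, so the effective reaction
reduces to `α((1 - ακ)|∇η|² + ∇η · curl ψ)`. For `η = eˣ sin y` and `curl ψ = (y, -x)` this is
`α eˣ((1 - ακ)eˣ + y sin y - x cos y)`. When `0 ≤ x` and `|y| ≤ π` the trigonometric terms are
at least `-x`, and `x ≤ e⁻¹ eˣ` is the tangent-line bound for `exp` at `1`; so `ακ < 1 - e⁻¹`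
is enough for positivity.
-/

section SecondDerivative

open scoped Topology

variable {E F : Type*} [NormedAddCommGroup E] [NormedSpace ℝ E] [NormedAddCommGroup F]
  [NormedSpace ℝ F] {f : E → F} {x : E}

theorem eventually_differentiableAt_of_contDiffAt_two (hf : ContDiffAt ℝ 2 f x) :
    ∀ᶠ y in 𝓝 x, DifferentiableAt ℝ f y :=
  (hf.eventually (by simp)).mono fun _ hy => hy.differentiableAt two_ne_zero

theorem hasFDerivAt_fderiv_apply (hf : ContDiffAt ℝ 2 f x) (w : E) :
    HasFDerivAt (fun y => fderiv ℝ f y w) ((fderiv ℝ (fderiv ℝ f) x).flip w) x :=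
  have hf' : ContDiffAt ℝ 1 (fderiv ℝ f) x := hf.fderiv_right (by norm_num)
  ((ContinuousLinearMap.apply ℝ F w).hasFDerivAt.comp x
    (hf'.differentiableAt one_ne_zero).hasFDerivAt).congr_fderiv (by ext; simp)

end SecondDerivative

section PartialDerivatives

variable {f : ℝ × ℝ → ℝ} {u v : ℝ × ℝ → ℝ × ℝ} {p : ℝ × ℝ}

theorem pdx_eq_fderiv (hf : DifferentiableAt ℝ f p) : pdx f p = fderiv ℝ f p (1, 0) :=
  (hf.hasFDerivAt.comp_hasDerivAt p.1
    ((hasDerivAt_id p.1).prodMk (hasDerivAt_const p.1 p.2))).deriv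

theorem pdy_eq_fderiv (hf : DifferentiableAt ℝ f p) : pdy f p = fderiv ℝ f p (0, 1) :=
  (hf.hasFDerivAt.comp_hasDerivAt p.2
    ((hasDerivAt_const p.2 p.1).prodMk (hasDerivAt_id p.2))).deriv

theorem hasFDerivAt_pdx (hf : ContDiffAt ℝ 2 f p) :
    HasFDerivAt (pdx f) ((fderiv ℝ (fderiv ℝ f) p).flip (1, 0)) p :=
  (hasFDerivAt_fderiv_apply hf (1, 0)).congr_of_eventuallyEq
    ((eventually_differentiableAt_of_contDiffAt_two hf).mono fun _ => pdx_eq_fderiv)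

theorem hasFDerivAt_pdy (hf : ContDiffAt ℝ 2 f p) :
    HasFDerivAt (pdy f) ((fderiv ℝ (fderiv ℝ f) p).flip (0, 1)) p :=
  (hasFDerivAt_fderiv_apply hf (0, 1)).congr_of_eventuallyEq
    ((eventually_differentiableAt_of_contDiffAt_two hf).mono fun _ => pdy_eq_fderiv)

theorem pdx_pdy_comm (hf : ContDiffAt ℝ 2 f p) : pdx (pdy f) p = pdy (pdx f) p := by
  have hsymm : IsSymmSndFDerivAt ℝ f p := hf.isSymmSndFDerivAt (by simp)
  rw [pdx_eq_fderiv (hasFDerivAt_pdy hf).differentiableAt, (hasFDerivAt_pdy hf).fderiv,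
    pdy_eq_fderiv (hasFDerivAt_pdx hf).differentiableAt, (hasFDerivAt_pdx hf).fderiv]
  exact hsymm (1, 0) (0, 1)

theorem differentiableAt_grad2 (hf : ContDiffAt ℝ 2 f p) : DifferentiableAt ℝ (grad2 f) p :=
  (hasFDerivAt_pdx hf).differentiableAt.prodMk (hasFDerivAt_pdy hf).differentiableAt

theorem differentiableAt_curl2 (hf : ContDiffAt ℝ 2 f p) : DifferentiableAt ℝ (curl2 f) p :=
  (hasFDerivAt_pdy hf).differentiableAt.prodMk (hasFDerivAt_pdx hf).differentiableAt.neg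

theorem div2_eq_fderiv (hu : DifferentiableAt ℝ u p) :
    div2 u p = (fderiv ℝ u p (1, 0)).1 + (fderiv ℝ u p (0, 1)).2 := by
  rw [div2, pdx_eq_fderiv hu.fst, pdy_eq_fderiv hu.snd, fderiv.fst hu, fderiv.snd hu]
  rfl

theorem div2_add (hu : DifferentiableAt ℝ u p) (hv : DifferentiableAt ℝ v p) :
    div2 (u + v) p = div2 u p + div2 v p := by
  rw [div2_eq_fderiv (hu.add hv), div2_eq_fderiv hu, div2_eq_fderiv hv, fderiv_add hu hv]
  exact add_add_add_comm _ _ _ _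

theorem div2_const_smul (a : ℝ) (hu : DifferentiableAt ℝ u p) :
    div2 (a • u) p = a * div2 u p := by
  rw [div2_eq_fderiv (hu.const_smul a), div2_eq_fderiv hu, fderiv_const_smul hu a]
  exact (mul_add _ _ _).symm

theorem div2_grad2 (f : ℝ × ℝ → ℝ) (p : ℝ × ℝ) : div2 (grad2 f) p = lap2 f p := rfl

theorem div2_curl2 (hf : ContDiffAt ℝ 2 f p) : div2 (curl2 f) p = 0 := by
  have hneg : pdy (fun q => -pdx f q) p = -pdy (pdx f) p := deriv.fun_neg
  change pdx (pdy f) p + pdy (fun q => -pdx f q) p = 0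
  rw [hneg, pdx_pdy_comm hf, add_neg_cancel]

theorem div2_smul_grad2_add_curl2 {η ψ : ℝ × ℝ → ℝ} (a : ℝ) (hη : ContDiffAt ℝ 2 η p)
    (hψ : ContDiffAt ℝ 2 ψ p) : div2 (a • grad2 η + curl2 ψ) p = a * lap2 η p := by
  rw [div2_add ((differentiableAt_grad2 hη).const_smul a) (differentiableAt_curl2 hψ),
    div2_const_smul a (differentiableAt_grad2 hη), div2_grad2, div2_curl2 hψ, add_zero]

end PartialDerivatives

section EffectiveReaction

/-- The fitted field `b = c - s∇η` obtained from a convection field `c` by the exponential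
weight with potential `η`; the parameter `s` is the product `ακ` of the paper. -/
noncomputable def fittedField (s : ℝ) (η : ℝ × ℝ → ℝ) (c : ℝ × ℝ → ℝ × ℝ) (p : ℝ × ℝ) : ℝ × ℝ :=
  c p - s • grad2 η p

/-- The effective reaction `E = α∇η · b - div b` that the exponential weight `exp (-αη)` produces
from the fitted field `b = c - ακ∇η`. -/
noncomputable def effectiveReaction (α κ : ℝ) (η : ℝ × ℝ → ℝ) (c : ℝ × ℝ → ℝ × ℝ)
    (p : ℝ × ℝ) : ℝ :=
  α * dot2 (grad2 η p) (fittedField (α * κ) η c p) - div2 (fittedField (α * κ) η c) p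

theorem fittedField_grad2_add_curl2 (s : ℝ) (η ψ : ℝ × ℝ → ℝ) :
    fittedField s η (grad2 η + curl2 ψ) = (1 - s) • grad2 η + curl2 ψ := by
  funext p
  simp only [fittedField, Pi.add_apply, Pi.smul_apply]
  module

theorem effectiveReaction_grad2_add_curl2 (α κ : ℝ) {η ψ : ℝ × ℝ → ℝ} {p : ℝ × ℝ}
    (hη : ContDiffAt ℝ 2 η p) (hψ : ContDiffAt ℝ 2 ψ p) :
    effectiveReaction α κ η (grad2 η + curl2 ψ) p =
      α * ((1 - α * κ) * dot2 (grad2 η p) (grad2 η p) + dot2 (grad2 η p) (curl2 ψ p)) -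
        (1 - α * κ) * lap2 η p := by
  rw [effectiveReaction, fittedField_grad2_add_curl2, div2_smul_grad2_add_curl2 _ hη hψ]
  simp only [dot2, Pi.add_apply, Pi.smul_apply, Prod.fst_add, Prod.snd_add, Prod.smul_fst,
    Prod.smul_snd, smul_eq_mul]
  ring

end EffectiveReaction

section ExpSinPotential

/-- The harmonic Helmholtz potential `η = eˣ sin y` of Case 2. -/
noncomputable def expSin (p : ℝ × ℝ) : ℝ := Real.exp p.1 * Real.sin p.2

/-- The stream function `ψ = (x² + y²)/2` of Case 2, whose curl is the rotation `(y, -x)`. -/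
noncomputable def halfNormSq (p : ℝ × ℝ) : ℝ := (p.1 ^ 2 + p.2 ^ 2) / 2

/-- The convection field `c` of Case 2, in coordinates. -/
noncomputable def convection (p : ℝ × ℝ) : ℝ × ℝ :=
  (Real.exp p.1 * Real.sin p.2 + p.2, Real.exp p.1 * Real.cos p.2 - p.1)

theorem contDiff_expSin : ContDiff ℝ 2 expSin := by
  unfold expSin
  fun_prop

theorem contDiff_halfNormSq : ContDiff ℝ 2 halfNormSq := by
  unfold halfNormSq
  fun_prop

theorem pdx_expSin : pdx expSin = expSin :=
  funext fun p => ((Real.hasDerivAt_exp p.1).mul_const (Real.sin p.2)).deriv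

theorem pdy_expSin : pdy expSin = fun p => Real.exp p.1 * Real.cos p.2 :=
  funext fun p => ((Real.hasDerivAt_sin p.2).const_mul (Real.exp p.1)).deriv

theorem pdy_pdy_expSin : pdy (pdy expSin) = -expSin := by
  rw [pdy_expSin]
  funext p
  exact ((Real.hasDerivAt_cos p.2).const_mul (Real.exp p.1)).deriv.trans (mul_neg _ _)

theorem lap2_expSin (p : ℝ × ℝ) : lap2 expSin p = 0 := by
  change pdx (pdx expSin) p + pdy (pdy expSin) p = 0
  rw [pdx_expSin, pdx_expSin, pdy_pdy_expSin, Pi.neg_apply, add_neg_cancel]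

theorem grad2_expSin (p : ℝ × ℝ) :
    grad2 expSin p = (Real.exp p.1 * Real.sin p.2, Real.exp p.1 * Real.cos p.2) := by
  rw [grad2, pdx_expSin, pdy_expSin, expSin]

theorem curl2_halfNormSq (p : ℝ × ℝ) : curl2 halfNormSq p = (p.2, -p.1) := by
  have hx : pdx halfNormSq p = p.1 := by simp [pdx, halfNormSq]
  have hy : pdy halfNormSq p = p.2 := by simp [pdy, halfNormSq]
  rw [curl2, hx, hy]

theorem convection_eq_grad2_add_curl2 : convection = grad2 expSin + curl2 halfNormSq := by
  funext p
  rw [Pi.add_apply, grad2_expSin, curl2_halfNormSq, Prod.mk_add_mk, ← sub_eq_add_neg, convection]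

theorem div2_convection (p : ℝ × ℝ) : div2 convection p = 0 := by
  have h := div2_smul_grad2_add_curl2 1 (p := p) contDiff_expSin.contDiffAt
    contDiff_halfNormSq.contDiffAt
  rwa [one_smul, ← convection_eq_grad2_add_curl2, lap2_expSin, mul_zero] at h

theorem effectiveReaction_convection (α κ : ℝ) (p : ℝ × ℝ) :
    effectiveReaction α κ expSin convection p = α * Real.exp p.1 *
      ((1 - α * κ) * Real.exp p.1 + p.2 * Real.sin p.2 - p.1 * Real.cos p.2) := by
  rw [convection_eq_grad2_add_curl2, effectiveReaction_grad2_add_curl2 α κ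
    contDiff_expSin.contDiffAt contDiff_halfNormSq.contDiffAt, lap2_expSin, grad2_expSin,
    curl2_halfNormSq]
  simp only [dot2]
  linear_combination (α * (1 - α * κ) * Real.exp p.1 ^ 2) * Real.sin_sq_add_cos_sq p.2

end ExpSinPotential

section Positivity

theorem mul_sin_nonneg_of_mem_Icc {y : ℝ} (hy : y ∈ Set.Icc (-Real.pi) Real.pi) :
    0 ≤ y * Real.sin y := by
  rcases le_total 0 y with hy₀ | hy₀
  · exact mul_nonneg hy₀ (Real.sin_nonneg_of_nonneg_of_le_pi hy₀ hy.2)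
  · exact mul_nonneg_of_nonpos_of_nonpos hy₀ (Real.sin_nonpos_of_nonpos_of_neg_pi_le hy₀ hy.1)

theorem lt_mul_exp_of_exp_neg_one_lt {a : ℝ} (ha : Real.exp (-1) < a) (x : ℝ) :
    x < a * Real.exp x :=
  calc x = x - 1 + 1 := (sub_add_cancel x 1).symm
    _ ≤ Real.exp (x - 1) := Real.add_one_le_exp (x - 1)
    _ = Real.exp (-1) * Real.exp x := by rw [← Real.exp_add, neg_add_eq_sub]
    _ < a * Real.exp x := mul_lt_mul_of_pos_right ha (Real.exp_pos x)

theorem effectiveReaction_convection_pos {α κ : ℝ} (hα : 0 < α)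
    (hακ : α * κ < 1 - Real.exp (-1)) {p : ℝ × ℝ}
    (hp : p ∈ Set.Ici 0 ×ˢ Set.Icc (-Real.pi) Real.pi) :
    0 < effectiveReaction α κ expSin convection p := by
  have hexp : p.1 < (1 - α * κ) * Real.exp p.1 :=
    lt_mul_exp_of_exp_neg_one_lt (lt_sub_comm.mp hακ) p.1
  have hsin : 0 ≤ p.2 * Real.sin p.2 := mul_sin_nonneg_of_mem_Icc hp.2
  have hcos : p.1 * Real.cos p.2 ≤ p.1 := mul_le_of_le_one_right hp.1 (Real.cos_le_one p.2)
  rw [effectiveReaction_convection]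
  exact mul_pos (mul_pos hα (Real.exp_pos p.1)) (by linarith)

theorem Icc_zero_one_subset_Ici_prod_Icc_pi :
    Set.Icc ((0 : ℝ), (0 : ℝ)) ((1 : ℝ), (1 : ℝ)) ⊆
      Set.Ici 0 ×ˢ Set.Icc (-Real.pi) Real.pi := by
  rw [← Set.Icc_prod_Icc]
  exact Set.prod_mono Set.Icc_subset_Ici_self
    (Set.Icc_subset_Icc (by linarith [Real.pi_pos]) (by linarith [Real.pi_gt_three]))

theorem half_lt_one_sub_exp_neg_one : 1 / 2 < 1 - Real.exp (-1) := by
  have h : Real.exp (-1) < 1 / 2 := by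
    rw [Real.exp_neg, one_div]
    exact inv_strictAnti₀ two_pos Real.exp_one_gt_two
  linarith

end Positivity

-- At `(1, 0)` the effective reaction is `αe((1 - ακ)e - 1)`, which vanishes for `ακ = 1 - e⁻¹`.
theorem stmt6_general (α κ : ℝ) (hακ : α * κ < 1 - Real.exp (-1)) (hα : 0 < α)
    (η : ℝ × ℝ → ℝ) (hη : η = fun p => Real.exp p.1 * Real.sin p.2)
    (c : ℝ × ℝ → ℝ × ℝ)
    (hc : c = fun p =>
      (Real.exp p.1 * Real.sin p.2 + p.2, Real.exp p.1 * Real.cos p.2 - p.1))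
    (ψ : ℝ × ℝ → ℝ) (hψ : ψ = fun p => (p.1 ^ 2 + p.2 ^ 2) / 2)
    (b : ℝ × ℝ → ℝ × ℝ) (hb : b = fun p => c p - (α * κ) • grad2 η p)
    (E : ℝ × ℝ → ℝ) (hE : E = fun p => α * dot2 (grad2 η p) (b p) - div2 b p)
    (δ : ℝ × ℝ → ℝ) (hδ : δ = fun _ => 0)
    (L : ℝ × ℝ → ℝ) (hL : L = fun p => δ p + E p / 2) :
    (∀ p : ℝ × ℝ, c p = grad2 η p + curl2 ψ p) ∧
    (∀ p : ℝ × ℝ, div2 c p = 0 ∧ lap2 η p = 0) ∧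
    (∀ p : ℝ × ℝ, E p = α * Real.exp p.1 *
      ((1 - α * κ) * Real.exp p.1 + p.2 * Real.sin p.2 - p.1 * Real.cos p.2)) ∧
    (∀ p : ℝ × ℝ, p ∈ Set.Ici 0 ×ˢ Set.Icc (-Real.pi) Real.pi →
      0 < E p / 2 ∧ δ p ≥ max 0 (-(2 * E p)) ∧ 0 < L p) := by
  obtain rfl : η = expSin := hη
  obtain rfl : c = convection := hc
  obtain rfl : ψ = halfNormSq := hψ
  obtain rfl : b = fittedField (α * κ) expSin convection := hb
  obtain rfl : E = effectiveReaction α κ expSin convection := hE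
  subst hδ hL
  refine ⟨congrFun convection_eq_grad2_add_curl2, fun p => ⟨div2_convection p, lap2_expSin p⟩,
    effectiveReaction_convection α κ, fun p hp => ?_⟩
  have hE_pos := effectiveReaction_convection_pos hα hακ hp
  exact ⟨half_pos hE_pos, max_le le_rfl (by linarith), by simpa using hE_pos⟩

/-- Case 2 of the numerical study: the divergence-free field
`c = ∇(eˣ sin y) + curl((x²+y²)/2)` has harmonic potential `η = eˣ sin y`, and the
effective reaction `E` from the exponential fitting is strictly positive on
`[0,1]²`, so `δ ≡ 0` is admissible and `L = E/2 > 0` there. -/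
theorem stmt6 (α κ : ℝ) (hακ₀ : 0 ≤ α * κ) (hακ₁ : α * κ ≤ 1 / 2) (hα : 0 < α)
    (η : ℝ × ℝ → ℝ) (hη : η = fun p => Real.exp p.1 * Real.sin p.2)
    (c : ℝ × ℝ → ℝ × ℝ)
    (hc : c = fun p =>
      (Real.exp p.1 * Real.sin p.2 + p.2, Real.exp p.1 * Real.cos p.2 - p.1))
    (ψ : ℝ × ℝ → ℝ) (hψ : ψ = fun p => (p.1 ^ 2 + p.2 ^ 2) / 2)
    (b : ℝ × ℝ → ℝ × ℝ) (hb : b = fun p => c p - (α * κ) • grad2 η p)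
    (E : ℝ × ℝ → ℝ) (hE : E = fun p => α * dot2 (grad2 η p) (b p) - div2 b p)
    (δ : ℝ × ℝ → ℝ) (hδ : δ = fun _ => 0)
    (L : ℝ × ℝ → ℝ) (hL : L = fun p => δ p + E p / 2) :
    (∀ p : ℝ × ℝ, c p = grad2 η p + curl2 ψ p) ∧
    (∀ p : ℝ × ℝ, div2 c p = 0 ∧ lap2 η p = 0) ∧
    (∀ p : ℝ × ℝ, E p = α * Real.exp p.1 *
      ((1 - α * κ) * Real.exp p.1 + p.2 * Real.sin p.2 - p.1 * Real.cos p.2)) ∧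
    (∀ p : ℝ × ℝ, p ∈ Set.Icc ((0 : ℝ), (0 : ℝ)) ((1 : ℝ), (1 : ℝ)) →
      0 < E p / 2 ∧ δ p ≥ max 0 (-(2 * E p)) ∧ 0 < L p) := by
  have h := stmt6_general α κ (hακ₁.trans_lt half_lt_one_sub_exp_neg_one) hα
    η hη c hc ψ hψ b hb E hE δ hδ L hL
  exact h.imp_right (And.imp_right (And.imp_right fun hpos p hp =>
    hpos p (Icc_zero_one_subset_Ici_prod_Icc_pi hp)))
end
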